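/- Let a_{12}, a_{23}, a_{31} be nonzero real numbers with a_{12}a_{23} + a_{23}a_{31} + a_{31}a_{12} ≠ 0, and define the star-triangle map by τ_i a_{jk} = -a_{jk} / (a_{12}a_{23} + a_{23}a_{31} + a_{31}a_{12}) for each permutation. Then for vectors f, f_1, f_2, f_3 in ℝ^N, if f_{ij} is defined for each pair i≠j by the discrete Moutard equation f_{ij} = f + a_{ij}(f_j − f_i) (with a_{ji} = −a_{ij}), the three values of f_{123} computed from the three equations f_{123} = f_i + (τ_i a_{jk})(f_{ik} − f_{ij}) all coincide. -/

import Mathlib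

/-!
Expanding `f₁ + τ₁a₂₃ (f₁₃ - f₁₂)` makes `f` cancel, and since
`(a₁₂a₂₃ + a₂₃a₃₁ + a₃₁a₁₂) - a₂₃ (a₁₂ + a₃₁) = a₃₁a₁₂`, what is left is the centre of mass of
`f₁, f₂, f₃` with weights `a₃₁a₁₂, a₁₂a₂₃, a₂₃a₃₁`. This point is invariant under cyclic
permutations of the indices, so the other two equations give it as well.
-/

namespace TNet

/-- The vertex `τᵢτⱼ f` which the discrete Moutard equation with coefficient `a = aᵢⱼ` assigns to
`f`, `x = τᵢ f` and `y = τⱼ f`. -/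
def moutardVertex {R V : Type*} [Ring R] [AddCommGroup V] [Module R V] (a : R) (f x y : V) : V :=
  f + a • (y - x)

/-- The star-triangle map. The coefficients on the three squares at a vertex of a cube are encoded
cyclically as `α i = a_{i,i+1}`, and `starTriangle α i` is `τ_{i+2} a_{i,i+1}`, the coefficient on
the opposite square. -/
def starTriangle {K : Type*} [Field K] (α : Fin 3 → K) (i : Fin 3) : K :=
  -α i / ∑ j, α j * α (j + 1)

theorem moutardVertex_neg {R V : Type*} [Ring R] [AddCommGroup V] [Module R V]
    (a : R) (f x y : V) : moutardVertex (-a) f x y = moutardVertex a f y x := by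
  simp only [moutardVertex, neg_smul, ← smul_neg, neg_sub]

theorem sum_fin_three_eq_add_shift {M : Type*} [AddCommMonoid M] (g : Fin 3 → M) (i : Fin 3) :
    ∑ j, g j = g i + g (i + 1) + g (i + 2) := by
  rw [← Equiv.sum_comp (Equiv.addLeft i) g, Fin.sum_univ_three]
  simp only [Equiv.coe_addLeft, add_zero]

theorem smul_sub_smul_moutardVertex_sub {R V : Type*} [CommRing R] [AddCommGroup V] [Module R V]
    (a b c : R) (f x y z : V) :
    (a * b + b * c + c * a) • x - b • (moutardVertex c f z x - moutardVertex a f x y) =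
      (c * a) • x + (a * b) • y + (b * c) • z := by
  simp only [moutardVertex]
  module

section Field

variable {K V : Type*} [Field K] [AddCommGroup V] [Module K V]

theorem moutardVertex_neg_div {s : K} (hs : s ≠ 0) (b : K) (f x y : V) :
    moutardVertex (-b / s) f x y = s⁻¹ • (s • f - b • (y - x)) := by
  rw [moutardVertex, smul_sub s⁻¹, inv_smul_smul₀ hs, smul_smul, neg_div, neg_smul,
    ← sub_eq_add_neg, div_eq_inv_mul]

theorem moutardVertex_starTriangle_eq_centerMass {α : Fin 3 → K}
    (hα : ∑ j, α j * α (j + 1) ≠ 0) (f : V) (x : Fin 3 → V) (i : Fin 3) :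
    moutardVertex (starTriangle α (i + 1)) (x i)
        (moutardVertex (α i) f (x i) (x (i + 1)))
        (moutardVertex (α (i + 2)) f (x (i + 2)) (x i)) =
      Finset.univ.centerMass (fun j ↦ α (j + 2) * α j) x := by
  have add_one_add_one : i + 1 + 1 = i + 2 := by fin_cases i <;> rfl
  have add_one_add_two : i + 1 + 2 = i := by fin_cases i <;> rfl
  have add_two_add_one : i + 2 + 1 = i := by fin_cases i <;> rfl
  have add_two_add_two : i + 2 + 2 = i + 1 := by fin_cases i <;> rfl
  have sum_eq : ∑ j, α j * α (j + 1) =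
      α i * α (i + 1) + α (i + 1) * α (i + 2) + α (i + 2) * α i := by
    rw [sum_fin_three_eq_add_shift _ i, add_one_add_one, add_two_add_one]
  have weights_sum : ∑ j, α (j + 2) * α j = ∑ j, α j * α (j + 1) := by
    rw [sum_eq, sum_fin_three_eq_add_shift _ i, add_one_add_two, add_two_add_two]
    ring
  rw [starTriangle, moutardVertex_neg_div hα, Finset.centerMass, weights_sum, sum_eq,
    smul_sub_smul_moutardVertex_sub, sum_fin_three_eq_add_shift _ i, add_one_add_two,
    add_two_add_two]

end Field

end TNet

open TNet in
theorem star_triangle_moutard_consistency_general {K V : Type*} [Field K] [AddCommGroup V]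
    [Module K V] {a12 a23 a31 : K} (hs : a12 * a23 + a23 * a31 + a31 * a12 ≠ 0)
    {f f1 f2 f3 f12 f23 f13 : V}
    (hf12 : f12 = f + a12 • (f2 - f1))
    (hf23 : f23 = f + a23 • (f3 - f2))
    (hf13 : f13 = f + (-a31) • (f3 - f1)) :
    f1 + (-a23 / (a12 * a23 + a23 * a31 + a31 * a12)) • (f13 - f12)
      = f2 + (-a31 / (a12 * a23 + a23 * a31 + a31 * a12)) • (f12 - f23) ∧
    f2 + (-a31 / (a12 * a23 + a23 * a31 + a31 * a12)) • (f12 - f23)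
      = f3 + (-a12 / (a12 * a23 + a23 * a31 + a31 * a12)) • (f23 - f13) := by
  have sum_eq : ∑ j, ![a12, a23, a31] j * ![a12, a23, a31] (j + 1) =
      a12 * a23 + a23 * a31 + a31 * a12 := Fin.sum_univ_three _
  have eq_centerMass := moutardVertex_starTriangle_eq_centerMass (sum_eq ▸ hs) f ![f1, f2, f3]
  replace hf13 : f13 = moutardVertex a31 f f3 f1 := hf13.trans (moutardVertex_neg a31 f f1 f3)
  subst hf12 hf23 hf13
  simp only [starTriangle, sum_eq] at eq_centerMass
  exact ⟨(eq_centerMass 0).trans (eq_centerMass 1).symm,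
    (eq_centerMass 1).trans (eq_centerMass 2).symm⟩

/-- 4D-style consistency of the star-triangle map for T-nets: the three values of
`f₁₂₃` computed from the three discrete Moutard equations coincide. -/
theorem star_triangle_moutard_consistency
    (N : ℕ) (a12 a23 a31 : ℝ)
    (h12 : a12 ≠ 0) (h23 : a23 ≠ 0) (h31 : a31 ≠ 0)
    (hs : a12 * a23 + a23 * a31 + a31 * a12 ≠ 0)
    (f f1 f2 f3 f12 f23 f13 : Fin N → ℝ)
    (hf12 : f12 = f + a12 • (f2 - f1))
    (hf23 : f23 = f + a23 • (f3 - f2))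
    (hf13 : f13 = f + (-a31) • (f3 - f1)) :
    f1 + (-a23 / (a12 * a23 + a23 * a31 + a31 * a12)) • (f13 - f12)
      = f2 + (-a31 / (a12 * a23 + a23 * a31 + a31 * a12)) • (f12 - f23) ∧
    f2 + (-a31 / (a12 * a23 + a23 * a31 + a31 * a12)) • (f12 - f23)
      = f3 + (-a12 / (a12 * a23 + a23 * a31 + a31 * a12)) • (f23 - f13) :=
  star_triangle_moutard_consistency_general hs hf12 hf23 hf13
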